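/- Let h ∈ ℝ. (i) If a linear operator D′ on ℂ[z] satisfies D′∘l₋₁ − l₋₁∘D′ = id, D′∘l₀ − l₀∘D′ = D′, and D′∘l₁ − l₁∘D′ = D′∘D′, then D′ = d/dz. (ii) If 2h is not a nonpositive integer and a linear operator F′ on ℂ[z] satisfies l₁∘F′ − F′∘l₁ = id, l₀∘F′ − F′∘l₀ = F′, and l₋₁∘F′ − F′∘l₋₁ = F′∘F′, then F′ = F. In particular the operators D and F of Proposition 1 are uniquely determined by these commutation relations. -/

import Mathlib

open Polynomial

/-- Multiplication by `z` on `ℂ[z]`: the generator `l₋₁`. -/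
noncomputable def lNeg : Module.End ℂ (Polynomial ℂ) :=
  LinearMap.mulLeft ℂ (Polynomial.X : Polynomial ℂ)

/-- The differentiation operator `D = d/dz` on `ℂ[z]`. -/
noncomputable def Dop : Module.End ℂ (Polynomial ℂ) :=
  Polynomial.derivative

/-- The generator `l₀ = z·d/dz + h·id`. -/
noncomputable def lZero (h : ℝ) : Module.End ℂ (Polynomial ℂ) :=
  lNeg * Dop + (h : ℂ) • 1

/-- The generator `l₁ = z·d²/dz² + 2h·d/dz`. -/
noncomputable def lOne (h : ℝ) : Module.End ℂ (Polynomial ℂ) :=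
  lNeg * Dop * Dop + ((2 * h : ℝ) : ℂ) • Dop

theorem lNeg_app (p : Polynomial ℂ) : lNeg p = Polynomial.X * p := rfl

theorem Dop_app (p : Polynomial ℂ) : Dop p = Polynomial.derivative p := rfl

theorem lZero_app (h : ℝ) (p : Polynomial ℂ) :
    lZero h p = Polynomial.X * Polynomial.derivative p + (h : ℂ) • p := rfl

theorem lOne_app (h : ℝ) (p : Polynomial ℂ) :
    lOne h p = Polynomial.X * Polynomial.derivative (Polynomial.derivative p)
      + ((2 * h : ℝ) : ℂ) • Polynomial.derivative p := rfl

theorem coeff_euler (p : Polynomial ℂ) (k : ℕ) :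
    (Polynomial.X * Polynomial.derivative p).coeff k = (k : ℂ) * p.coeff k := by
  cases k with
  | zero => simp
  | succ k => simp [Polynomial.coeff_X_mul, Polynomial.coeff_derivative, mul_comm]

theorem lZero_pow (h : ℝ) (n : ℕ) :
    lZero h (Polynomial.X ^ n) = ((n : ℂ) + h) • (Polynomial.X ^ n : Polynomial ℂ) := by
  rw [lZero_app]
  ext k
  rw [Polynomial.coeff_add, coeff_euler]
  simp only [Polynomial.coeff_smul, smul_eq_mul, Polynomial.coeff_X_pow]
  split_ifs with hk
  · subst hk; ring
  · ring

theorem lOne_pow (h : ℝ) (n : ℕ) :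
    lOne h (Polynomial.X ^ (n + 1)) =
      (((n : ℂ) + 1) * (n + 2 * h)) • (Polynomial.X ^ n : Polynomial ℂ) := by
  have hd : Polynomial.derivative (Polynomial.X ^ (n + 1) : Polynomial ℂ)
      = ((n : ℂ) + 1) • Polynomial.X ^ n := by
    rw [Polynomial.derivative_X_pow, Polynomial.smul_eq_C_mul]; simp
  rw [lOne_app, hd]
  ext k
  rw [Polynomial.coeff_add, coeff_euler]
  simp only [Polynomial.coeff_smul, smul_eq_mul, Polynomial.coeff_X_pow]
  split_ifs with hk
  · subst hk; push_cast; ring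
  · ring

theorem end_ext {A B : Module.End ℂ (Polynomial ℂ)}
    (hAB : ∀ n : ℕ, A (Polynomial.X ^ n) = B (Polynomial.X ^ n)) : A = B := by
  refine Polynomial.lhom_ext' fun n => LinearMap.ext_ring ?_
  simpa [Polynomial.monomial_one_right_eq_X_pow] using hAB n

/-- uniqueness of the operators `D` and `F` of Proposition 1. -/
theorem stmt2 (h : ℝ) :
    (∀ D' : Module.End ℂ (Polynomial ℂ),
      (D' * lNeg - lNeg * D' = 1 ∧
       D' * lZero h - lZero h * D' = D' ∧
       D' * lOne h - lOne h * D' = D' * D') → D' = Dop) ∧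
    ((∀ n : ℕ, 2 * h ≠ -(n : ℝ)) →
      ∀ F F' : Module.End ℂ (Polynomial ℂ),
      (∀ n : ℕ, F (Polynomial.X ^ n) = ((n : ℂ) + 2 * h)⁻¹ • Polynomial.X ^ (n + 1)) →
      (lOne h * F' - F' * lOne h = 1 ∧
       lZero h * F' - F' * lZero h = F' ∧
       lNeg * F' - F' * lNeg = F' * F') → F' = F) := by
  constructor
  · rintro D' ⟨h1, h2, -⟩
    have hone : D' 1 = 0 := by
      have e := congrArg (fun A : Module.End ℂ (Polynomial ℂ) => A (Polynomial.X ^ 0)) h2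
      simp only [LinearMap.sub_apply, Module.End.mul_apply, lZero_pow, map_smul] at e
      rw [lZero_app, pow_zero] at e
      ext k
      have e' := congrArg (fun p => Polynomial.coeff p k) e
      simp only [Polynomial.coeff_sub, Polynomial.coeff_add, coeff_euler,
        Polynomial.coeff_smul, smul_eq_mul, Nat.cast_zero] at e'
      have hk : ((k : ℂ) + 1) * (D' 1).coeff k = 0 := by linear_combination -e'
      rw [Polynomial.coeff_zero]
      exact (mul_eq_zero.mp hk).resolve_left (by exact_mod_cast Nat.succ_ne_zero k)
    apply end_ext
    intro n
    induction n with
    | zero => simp [hone, Dop_app]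
    | succ n ih =>
      have e := congrArg (fun A : Module.End ℂ (Polynomial ℂ) => A (Polynomial.X ^ n)) h1
      simp only [LinearMap.sub_apply, Module.End.mul_apply, lNeg_app, Module.End.one_apply, ih,
        Dop_app] at e
      rw [Dop_app, pow_succ', Polynomial.derivative_mul, Polynomial.derivative_X,
        sub_eq_iff_eq_add.mp e, one_mul]
  · rintro hh F F' hF ⟨h1, h2, -⟩
    have hc : ∀ n : ℕ, (n : ℂ) + 2 * h ≠ 0 := by
      intro n hn
      apply hh n
      have : (n : ℝ) + 2 * h = 0 := by exact_mod_cast hn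
      linarith
    have hmono : ∀ n : ℕ, ∃ c : ℂ, F' (Polynomial.X ^ n) = c • Polynomial.X ^ (n + 1) := by
      intro n
      have e := congrArg (fun A : Module.End ℂ (Polynomial ℂ) => A (Polynomial.X ^ n)) h2
      simp only [LinearMap.sub_apply, Module.End.mul_apply, lZero_pow, map_smul] at e
      rw [lZero_app] at e
      refine ⟨(F' (Polynomial.X ^ n)).coeff (n + 1), ?_⟩
      ext k
      have e' := congrArg (fun p => Polynomial.coeff p k) e
      simp only [Polynomial.coeff_sub, Polynomial.coeff_add, coeff_euler,
        Polynomial.coeff_smul, smul_eq_mul] at e'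
      simp only [Polynomial.coeff_smul, smul_eq_mul, Polynomial.coeff_X_pow]
      split_ifs with hk
      · subst hk; ring
      · have hk' : ((k : ℂ) - (n + 1)) * (F' (Polynomial.X ^ n)).coeff k = 0 := by
          linear_combination e'
        rw [mul_zero]
        refine (mul_eq_zero.mp hk').resolve_left (sub_ne_zero.mpr ?_)
        exact_mod_cast hk
    have key : ∀ n : ℕ, F' (Polynomial.X ^ n) =
        ((n : ℂ) + 2 * h)⁻¹ • Polynomial.X ^ (n + 1) := by
      intro n
      induction n with
      | zero =>
        obtain ⟨c, hcc⟩ := hmono 0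
        have e := congrArg (fun A : Module.End ℂ (Polynomial ℂ) => A (Polynomial.X ^ 0)) h1
        have hz : lOne h (Polynomial.X ^ 0) = 0 := by simp [lOne_app]
        simp only [LinearMap.sub_apply, Module.End.mul_apply, hcc, map_smul, lOne_pow,
          Module.End.one_apply, hz, map_zero, sub_zero, smul_smul] at e
        have e' := congrArg (fun p => Polynomial.coeff p 0) e
        simp only [Polynomial.coeff_smul, smul_eq_mul, Polynomial.coeff_X_pow, if_true] at e'
        rw [hcc]
        congr 1
        apply eq_inv_of_mul_eq_one_left
        push_cast at e' ⊢
        linear_combination e'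
      | succ n ih =>
        obtain ⟨c, hcc⟩ := hmono (n + 1)
        have e := congrArg (fun A : Module.End ℂ (Polynomial ℂ) => A (Polynomial.X ^ (n + 1))) h1
        simp only [LinearMap.sub_apply, Module.End.mul_apply, hcc, map_smul, lOne_pow,
          Module.End.one_apply, ih, smul_smul] at e
        have e' := congrArg (fun p => Polynomial.coeff p (n + 1)) e
        simp only [Polynomial.coeff_sub, Polynomial.coeff_smul, smul_eq_mul,
          Polynomial.coeff_X_pow, if_true] at e'
        rw [mul_assoc ((n : ℂ) + 1), mul_inv_cancel₀ (hc n)] at e'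
        rw [hcc]
        congr 1
        apply eq_inv_of_mul_eq_one_left
        have hn : ((n : ℂ) + 2) ≠ 0 := by exact_mod_cast Nat.succ_ne_zero (n + 1)
        apply mul_left_cancel₀ hn
        push_cast at e' ⊢
        linear_combination e'
    apply end_ext
    intro n
    rw [key, hF]
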